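/- Let 1 < p < Q, let a ∈ ℝ with Q ≠ ap, and let 1/p + 1/q = 1. For every smooth compactly supported function f on ℍⁿ \ {0}, it holds that (|Q − ap|/p) · ∫_{ℍⁿ} (|z|^p/d^p) · (|f|^p/d^{ap}) dξ ≤ (∫_{ℍⁿ} |∇_H f|^p / d^{ap} dξ)^{1/p} · (∫_{ℍⁿ} (|z|^p/d^p) · (|f|^p/d^{ap}) · d^q dξ)^{1/q}. -/

import Mathlib

open MeasureTheory Real

noncomputable section

/-- The underlying space of the Heisenberg group `ℍⁿ = ℝⁿ × ℝⁿ × ℝ`,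
with points `ξ = (x, y, t)` and `z = (x, y)`. -/
abbrev Heis (n : ℕ) : Type := (Fin n → ℝ) × (Fin n → ℝ) × ℝ

/-- The left-invariant horizontal vector field `X_j = ∂/∂x_j + 2 y_j ∂/∂t`. -/
noncomputable def XH {n : ℕ} (j : Fin n) (f : Heis n → ℝ) (ξ : Heis n) : ℝ :=
  fderiv ℝ f ξ (Pi.single j 1, 0, 0) + 2 * ξ.2.1 j * fderiv ℝ f ξ (0, 0, 1)

/-- The left-invariant horizontal vector field `Y_j = ∂/∂y_j − 2 x_j ∂/∂t`. -/
noncomputable def YH {n : ℕ} (j : Fin n) (f : Heis n → ℝ) (ξ : Heis n) : ℝ :=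
  fderiv ℝ f ξ (0, Pi.single j 1, 0) - 2 * ξ.1 j * fderiv ℝ f ξ (0, 0, 1)

/-- The horizontal gradient `∇_H f = (X_1 f, …, X_n f, Y_1 f, …, Y_n f)`. -/
noncomputable def hGrad {n : ℕ} (f : Heis n → ℝ) (ξ : Heis n) : (Fin n → ℝ) × (Fin n → ℝ) :=
  (fun j => XH j f ξ, fun j => YH j f ξ)

/-- Euclidean length of a horizontal vector. -/
noncomputable def hNorm {n : ℕ} (v : (Fin n → ℝ) × (Fin n → ℝ)) : ℝ :=
  Real.sqrt (∑ j, v.1 j ^ 2 + ∑ j, v.2 j ^ 2)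

/-- Euclidean inner product of horizontal vectors. -/
noncomputable def hDot {n : ℕ} (v w : (Fin n → ℝ) × (Fin n → ℝ)) : ℝ :=
  ∑ j, v.1 j * w.1 j + ∑ j, v.2 j * w.2 j

/-- The horizontal divergence `div_H w = Σ_j (X_j w_j + Y_j w_{n+j})`. -/
noncomputable def hDiv {n : ℕ} (V : Heis n → (Fin n → ℝ) × (Fin n → ℝ)) (ξ : Heis n) : ℝ :=
  ∑ j, (XH j (fun η => (V η).1 j) ξ + YH j (fun η => (V η).2 j) ξ)

/-- The sub-Laplacian `Δ_H = Σ_j (X_j² + Y_j²) = div_H ∘ ∇_H`. -/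
noncomputable def hLap {n : ℕ} (f : Heis n → ℝ) : Heis n → ℝ :=
  hDiv (hGrad f)

/-- The `p`-sub-Laplacian `Δ_{H,p} f = div_H (|∇_H f|^{p−2} ∇_H f)`. -/
noncomputable def pLap {n : ℕ} (p : ℝ) (f : Heis n → ℝ) : Heis n → ℝ :=
  hDiv (fun ξ => hNorm (hGrad f ξ) ^ (p - 2) • hGrad f ξ)

/-- The Euclidean norm `|z|` of the horizontal component `z = (x, y)`. -/
noncomputable def zNorm {n : ℕ} (ξ : Heis n) : ℝ :=
  Real.sqrt (∑ j, ξ.1 j ^ 2 + ∑ j, ξ.2.1 j ^ 2)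

/-- The Heisenberg gauge `d(z, t) = (|z|⁴ + t²)^{1/4}`. -/
noncomputable def dH {n : ℕ} (ξ : Heis n) : ℝ :=
  ((∑ j, ξ.1 j ^ 2 + ∑ j, ξ.2.1 j ^ 2) ^ 2 + ξ.2.2 ^ 2) ^ (1 / 4 : ℝ)

/-- A smooth compactly supported function on `ℍⁿ \ {0}`. -/
def IsTestAwayZero {n : ℕ} (f : Heis n → ℝ) : Prop :=
  ContDiff ℝ (⊤ : ℕ∞) f ∧ HasCompactSupport f ∧ (0 : Heis n) ∉ tsupport f

/-- The squared length `|z|²`. -/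
def NH {n : ℕ} (ξ : Heis n) : ℝ := ∑ j, ξ.1 j ^ 2 + ∑ j, ξ.2.1 j ^ 2

/-- The quantity `d⁴`. -/
def BH {n : ℕ} (ξ : Heis n) : ℝ := NH ξ ^ 2 + ξ.2.2 ^ 2

/-- The vector field `d³ ∇_H d`, written in Euclidean coordinates. -/
def FH {n : ℕ} (ξ : Heis n) : Heis n :=
  (fun j => NH ξ * ξ.1 j + ξ.2.2 * ξ.2.1 j, fun j => NH ξ * ξ.2.1 j - ξ.2.2 * ξ.1 j,
    2 * NH ξ * ξ.2.2)

lemma NH_nonneg {n : ℕ} (ξ : Heis n) : 0 ≤ NH ξ := by unfold NH; positivity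
lemma BH_nonneg {n : ℕ} (ξ : Heis n) : 0 ≤ BH ξ := by unfold BH; positivity

lemma BH_pos {n : ℕ} {ξ : Heis n} (h : ξ ≠ 0) : 0 < BH ξ := by
  rcases (BH_nonneg ξ).lt_or_eq with h1 | h1
  · exact h1
  exfalso; apply h
  unfold BH at h1
  have hN : NH ξ = 0 := by nlinarith [sq_nonneg (NH ξ), sq_nonneg ξ.2.2]
  have ht : ξ.2.2 = 0 := by nlinarith [sq_nonneg (NH ξ), sq_nonneg ξ.2.2]
  unfold NH at hN
  have hx0 : 0 ≤ ∑ j, ξ.1 j ^ 2 := by positivity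
  have hy0 : 0 ≤ ∑ j, ξ.2.1 j ^ 2 := by positivity
  have hx : ∑ j, ξ.1 j ^ 2 = 0 := by linarith
  have hy : ∑ j, ξ.2.1 j ^ 2 = 0 := by linarith
  rw [Finset.sum_eq_zero_iff_of_nonneg (fun i _ => sq_nonneg _)] at hx hy
  refine Prod.ext (funext fun j => ?_) (Prod.ext (funext fun j => ?_) ht)
  · simpa using hx j (Finset.mem_univ j)
  · simpa using hy j (Finset.mem_univ j)

lemma NH_contDiff {n : ℕ} {m : WithTop ℕ∞} : ContDiff ℝ m (NH : Heis n → ℝ) := by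
  unfold NH; fun_prop

lemma BH_contDiff {n : ℕ} {m : WithTop ℕ∞} : ContDiff ℝ m (BH : Heis n → ℝ) := by
  unfold BH
  exact (NH_contDiff.pow 2).add (by fun_prop)

lemma NH_continuous {n : ℕ} : Continuous (NH : Heis n → ℝ) :=
  (NH_contDiff (m := 0)).continuous
lemma BH_continuous {n : ℕ} : Continuous (BH : Heis n → ℝ) :=
  (BH_contDiff (m := 0)).continuous

lemma FH_continuous {n : ℕ} : Continuous (FH : Heis n → Heis n) := by
  have := NH_continuous (n := n)
  unfold FH; fun_prop

lemma mul_NH {n : ℕ} (c : ℝ) (ξ : Heis n) :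
    c * NH ξ = ∑ j, c * (ξ.1 j ^ 2 + ξ.2.1 j ^ 2) := by
  rw [NH, ← Finset.sum_add_distrib, Finset.mul_sum]

/-- The coordinate `x_j` as a continuous linear map. -/
def cx {n : ℕ} (j : Fin n) : Heis n →L[ℝ] ℝ :=
  (ContinuousLinearMap.proj (R := ℝ) (φ := fun _ : Fin n => ℝ) j).comp
    (ContinuousLinearMap.fst ℝ (Fin n → ℝ) ((Fin n → ℝ) × ℝ))

/-- The coordinate `y_j` as a continuous linear map. -/
def cy {n : ℕ} (j : Fin n) : Heis n →L[ℝ] ℝ :=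
  (ContinuousLinearMap.proj (R := ℝ) (φ := fun _ : Fin n => ℝ) j).comp
    ((ContinuousLinearMap.fst ℝ (Fin n → ℝ) ℝ).comp
    (ContinuousLinearMap.snd ℝ (Fin n → ℝ) ((Fin n → ℝ) × ℝ)))

/-- The coordinate `t` as a continuous linear map. -/
def ct {n : ℕ} : Heis n →L[ℝ] ℝ :=
    ((ContinuousLinearMap.snd ℝ (Fin n → ℝ) ℝ).comp
    (ContinuousLinearMap.snd ℝ (Fin n → ℝ) ((Fin n → ℝ) × ℝ)))

lemma cx_apply {n : ℕ} (j : Fin n) (ξ : Heis n) : cx j ξ = ξ.1 j := rfl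
lemma cy_apply {n : ℕ} (j : Fin n) (ξ : Heis n) : cy j ξ = ξ.2.1 j := rfl
lemma ct_apply {n : ℕ} (ξ : Heis n) : ct ξ = ξ.2.2 := rfl

lemma cx_hasFDerivAt {n : ℕ} (j : Fin n) (ξ : Heis n) :
    HasFDerivAt (fun η : Heis n => η.1 j) (cx j) ξ := (cx j).hasFDerivAt
lemma cy_hasFDerivAt {n : ℕ} (j : Fin n) (ξ : Heis n) :
    HasFDerivAt (fun η : Heis n => η.2.1 j) (cy j) ξ := (cy j).hasFDerivAt
lemma ct_hasFDerivAt {n : ℕ} (ξ : Heis n) :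
    HasFDerivAt (fun η : Heis n => η.2.2) ct ξ := ct.hasFDerivAt
lemma NH_hasFDerivAt {n : ℕ} (ξ : Heis n) : HasFDerivAt NH (fderiv ℝ NH ξ) ξ :=
  ((NH_contDiff (m := 1)).differentiable one_ne_zero ξ).hasFDerivAt

lemma NH_fderiv {n : ℕ} (ξ v : Heis n) :
    fderiv ℝ NH ξ v = ∑ j, 2 * ξ.1 j * v.1 j + ∑ j, 2 * ξ.2.1 j * v.2.1 j := by
  have := (HasFDerivAt.fun_sum (u := Finset.univ) fun j _ => (cx_hasFDerivAt j ξ).pow 2).add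
    (HasFDerivAt.fun_sum (u := Finset.univ) fun j _ => (cy_hasFDerivAt j ξ).pow 2)
  have e : fderiv ℝ NH ξ = _ := HasFDerivAt.fderiv (f := NH) this
  rw [e]
  simp [cx_apply, cy_apply, ct_apply]

lemma BH_fderiv {n : ℕ} (ξ v : Heis n) :
    fderiv ℝ BH ξ v = 2 * NH ξ * fderiv ℝ NH ξ v + 2 * ξ.2.2 * v.2.2 := by
  have := ((NH_hasFDerivAt ξ).pow 2).add ((ct_hasFDerivAt ξ).pow 2)
  have e : fderiv ℝ BH ξ = _ := HasFDerivAt.fderiv (f := BH) this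
  rw [e]
  simp [cx_apply, cy_apply, ct_apply]

lemma NH_fderiv_F {n : ℕ} (ξ : Heis n) : fderiv ℝ NH ξ (FH ξ) = 2 * NH ξ ^ 2 := by
  rw [NH_fderiv, ← Finset.sum_add_distrib]
  have : 2 * NH ξ ^ 2 = 2 * NH ξ * NH ξ := by ring
  rw [this, mul_NH]
  refine Finset.sum_congr rfl fun j _ => ?_
  simp only [FH]; ring

lemma BH_fderiv_F {n : ℕ} (ξ : Heis n) : fderiv ℝ BH ξ (FH ξ) = 4 * NH ξ * BH ξ := by
  rw [BH_fderiv, NH_fderiv_F]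
  simp only [FH, BH]; ring

lemma sum_F_sq {n : ℕ} (ξ : Heis n) :
    ∑ j, (FH ξ).1 j ^ 2 + ∑ j, (FH ξ).2.1 j ^ 2 = NH ξ * BH ξ := by
  have : NH ξ * BH ξ = (NH ξ ^ 2 + ξ.2.2 ^ 2) * NH ξ := by rw [BH]; ring
  rw [this, mul_NH, ← Finset.sum_add_distrib]
  refine Finset.sum_congr rfl fun j _ => ?_
  simp only [FH]; ring

lemma heis_decomp {n : ℕ} (v : Heis n) : v =
    ∑ j, v.1 j • ((Pi.single j 1, 0, 0) : Heis n) +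
    ∑ j, v.2.1 j • ((0, Pi.single j 1, 0) : Heis n) + v.2.2 • ((0, 0, 1) : Heis n) := by
  refine Prod.ext ?_ (Prod.ext ?_ ?_)
  · simp only [Prod.fst_add, Prod.fst_sum, Prod.smul_fst]
    funext i; simp [Finset.sum_apply, Pi.single_apply]
  · simp only [Prod.fst_add, Prod.fst_sum, Prod.smul_fst, Prod.snd_add, Prod.snd_sum, Prod.smul_snd]
    funext i; simp [Finset.sum_apply, Pi.single_apply]
  · simp [Prod.snd_sum]

lemma fderiv_decomp {n : ℕ} (L : Heis n →L[ℝ] ℝ) (v : Heis n) : L v =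
    ∑ j, v.1 j * L (Pi.single j 1, 0, 0) +
    ∑ j, v.2.1 j * L (0, Pi.single j 1, 0) + v.2.2 * L (0, 0, 1) := by
  conv_lhs => rw [heis_decomp v]
  simp only [map_add, map_sum, map_smul, smul_eq_mul]

lemma fderiv_F_eq {n : ℕ} (f : Heis n → ℝ) (ξ : Heis n) : fderiv ℝ f ξ (FH ξ) =
    ∑ j, (FH ξ).1 j * XH j f ξ + ∑ j, (FH ξ).2.1 j * YH j f ξ := by
  rw [fderiv_decomp]
  simp only [XH, YH, mul_add, mul_sub, Finset.sum_add_distrib, Finset.sum_sub_distrib]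
  have : (FH ξ).2.2 * fderiv ℝ f ξ (0, 0, 1) =
      ∑ j, (FH ξ).1 j * (2 * ξ.2.1 j * fderiv ℝ f ξ (0, 0, 1)) -
      ∑ j, (FH ξ).2.1 j * (2 * ξ.1 j * fderiv ℝ f ξ (0, 0, 1)) := by
    have e : (FH ξ).2.2 * fderiv ℝ f ξ (0, 0, 1) =
      (2 * ξ.2.2 * fderiv ℝ f ξ (0, 0, 1)) * NH ξ := by simp only [FH]; ring
    rw [e, mul_NH, ← Finset.sum_sub_distrib]
    refine Finset.sum_congr rfl fun j _ => ?_
    simp only [FH]; ring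
  rw [this]; ring

lemma fderiv_F_le {n : ℕ} (f : Heis n → ℝ) (ξ : Heis n) : |fderiv ℝ f ξ (FH ξ)| ≤
    √(NH ξ) * √(BH ξ) * hNorm (hGrad f ξ) := by
  rw [fderiv_F_eq, ← Real.sqrt_mul (NH_nonneg ξ), ← sum_F_sq, hNorm, ← Real.sqrt_mul (by positivity)]
  apply Real.abs_le_sqrt
  have := Finset.sum_mul_sq_le_sq_mul_sq (Finset.univ : Finset (Fin n ⊕ Fin n))
    (Sum.elim (FH ξ).1 (FH ξ).2.1) (Sum.elim (hGrad f ξ).1 (hGrad f ξ).2)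
  simpa [Fintype.sum_sum_type, hGrad] using this

/-- Integration by parts against a coordinate function. -/
lemma ibp {n : ℕ} (k m : Heis n → ℝ) (hk : ContDiff ℝ 1 k) (hkc : HasCompactSupport k)
    (hm : ContDiff ℝ 1 m) (v : Heis n) :
    ∫ ξ, m ξ * fderiv ℝ k ξ v = - ∫ ξ, fderiv ℝ m ξ v * k ξ := by
  have c1 : Continuous fun ξ => fderiv ℝ k ξ v :=
    (hk.continuous_fderiv one_ne_zero).clm_apply continuous_const
  have c2 : Continuous fun ξ => fderiv ℝ m ξ v :=
    (hm.continuous_fderiv one_ne_zero).clm_apply continuous_const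
  have : (volume : Measure ((Fin n → ℝ) × ℝ)).IsAddHaarMeasure :=
    Measure.prod.instIsAddHaarMeasure _ _
  have : (volume : Measure (Heis n)).IsAddHaarMeasure :=
    Measure.prod.instIsAddHaarMeasure _ _
  apply integral_mul_fderiv_eq_neg_fderiv_mul_of_integrable
  · exact (c2.mul hk.continuous).integrable_of_hasCompactSupport hkc.mul_left
  · exact (hm.continuous.mul c1).integrable_of_hasCompactSupport (hkc.fderiv_apply ℝ v).mul_left
  · exact (hm.continuous.mul hk.continuous).integrable_of_hasCompactSupport hkc.mul_left
  · exact fun x _ => hm.differentiable one_ne_zero x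
  · exact fun x _ => hk.differentiable one_ne_zero x


lemma FH1_fderiv {n : ℕ} (ξ : Heis n) (j : Fin n) :
    fderiv ℝ (fun η : Heis n => (FH η).1 j) ξ (Pi.single j 1, 0, 0) = NH ξ + 2 * ξ.1 j ^ 2 := by
  have := ((NH_hasFDerivAt ξ).mul (cx_hasFDerivAt j ξ)).add
    ((ct_hasFDerivAt ξ).mul (cy_hasFDerivAt j ξ))
  have e : fderiv ℝ (fun η : Heis n => (FH η).1 j) ξ = _ :=
    HasFDerivAt.fderiv (f := fun η : Heis n => (FH η).1 j) this
  rw [e]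
  simp [NH_fderiv, cx_apply, cy_apply, ct_apply, Pi.single_apply]
  ring

lemma FH2_fderiv {n : ℕ} (ξ : Heis n) (j : Fin n) :
    fderiv ℝ (fun η : Heis n => (FH η).2.1 j) ξ (0, Pi.single j 1, 0) = NH ξ + 2 * ξ.2.1 j ^ 2 := by
  have := ((NH_hasFDerivAt ξ).mul (cy_hasFDerivAt j ξ)).sub
    ((ct_hasFDerivAt ξ).mul (cx_hasFDerivAt j ξ))
  have e : fderiv ℝ (fun η : Heis n => (FH η).2.1 j) ξ = _ :=
    HasFDerivAt.fderiv (f := fun η : Heis n => (FH η).2.1 j) this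
  rw [e]
  simp [NH_fderiv, cx_apply, cy_apply, ct_apply, Pi.single_apply]
  ring

lemma FH3_fderiv {n : ℕ} (ξ : Heis n) :
    fderiv ℝ (fun η : Heis n => (FH η).2.2) ξ (0, 0, 1) = 2 * NH ξ := by
  have := ((NH_hasFDerivAt ξ).const_mul 2).mul (ct_hasFDerivAt ξ)
  have e : fderiv ℝ (fun η : Heis n => (FH η).2.2) ξ = _ :=
    HasFDerivAt.fderiv (f := fun η : Heis n => (FH η).2.2) this
  rw [e]
  simp [NH_fderiv, ct_apply]

lemma FH_contDiff {n : ℕ} : ContDiff ℝ 1 (FH : Heis n → Heis n) := by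
  have := NH_contDiff (n := n) (m := 1)
  unfold FH; fun_prop

lemma div_F {n : ℕ} (k : Heis n → ℝ) (hk : ContDiff ℝ 1 k) (hkc : HasCompactSupport k) :
    ∫ ξ, fderiv ℝ k ξ (FH ξ) = - ((2 * n + 4) * ∫ ξ, NH ξ * k ξ) := by
  have hF := FH_contDiff (n := n)
  have hN1 := NH_contDiff (n := n) (m := 1)
  have m1 : ∀ j, ContDiff ℝ 1 fun η : Heis n => (FH η).1 j := by fun_prop
  have m2 : ∀ j, ContDiff ℝ 1 fun η : Heis n => (FH η).2.1 j := by fun_prop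
  have m3 : ContDiff ℝ 1 fun η : Heis n => (FH η).2.2 := by fun_prop
  have int : ∀ (m : Heis n → ℝ) (v : Heis n), ContDiff ℝ 1 m →
      Integrable fun ξ => m ξ * fderiv ℝ k ξ v := fun m v hm =>
    (hm.continuous.mul ((hk.continuous_fderiv one_ne_zero).clm_apply
      continuous_const)).integrable_of_hasCompactSupport (hkc.fderiv_apply ℝ v).mul_left
  have int' : ∀ (m : Heis n → ℝ), Continuous m →
      Integrable fun ξ => m ξ * k ξ := fun m hm =>
    (hm.mul hk.continuous).integrable_of_hasCompactSupport hkc.mul_left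
  have hN := NH_continuous (n := n)
  have i1 : ∀ j : Fin n, Integrable fun ξ : Heis n => (NH ξ + 2 * ξ.1 j ^ 2) * k ξ :=
    fun j => int' _ (by fun_prop)
  have i2 : ∀ j : Fin n, Integrable fun ξ : Heis n => (NH ξ + 2 * ξ.2.1 j ^ 2) * k ξ :=
    fun j => int' _ (by fun_prop)
  have i3 : Integrable fun ξ : Heis n => (2 * NH ξ) * k ξ := int' _ (by fun_prop)
  simp_rw [fun ξ => fderiv_decomp (fderiv ℝ k ξ) (FH ξ)]
  rw [integral_add, integral_add, integral_finsetSum, integral_finsetSum]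
  · simp_rw [fun j => ibp k _ hk hkc (m1 j), fun j => ibp k _ hk hkc (m2 j),
      ibp k _ hk hkc m3, FH1_fderiv, FH2_fderiv, FH3_fderiv]
    rw [Finset.sum_neg_distrib, Finset.sum_neg_distrib, ← integral_finsetSum _ fun j _ => i1 j,
      ← integral_finsetSum _ fun j _ => i2 j, ← neg_add, ← neg_add,
      ← integral_add (integrable_finsetSum _ fun j _ => i1 j)
        (integrable_finsetSum _ fun j _ => i2 j), ← integral_add _ i3, ← integral_const_mul]
    · congr 1
      refine integral_congr_ae (ae_of_all _ fun ξ => ?_)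
      simp only [← Finset.sum_mul, Finset.sum_add_distrib, ← Finset.mul_sum]
      have : NH ξ = ∑ j, ξ.1 j ^ 2 + ∑ j, ξ.2.1 j ^ 2 := rfl
      simp only [Finset.sum_const, Finset.card_univ, Fintype.card_fin, nsmul_eq_mul]
      linear_combination (-2 * k ξ) * this
    · exact (integrable_finsetSum _ fun j _ => i1 j).add
        (integrable_finsetSum _ fun j _ => i2 j)
  · exact fun j _ => int _ _ (m2 j)
  · exact fun j _ => int _ _ (m1 j)
  · exact integrable_finsetSum _ fun j _ => int _ _ (m1 j)
  · exact integrable_finsetSum _ fun j _ => int _ _ (m2 j)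
  · exact (integrable_finsetSum _ fun j _ => int _ _ (m1 j)).add
      (integrable_finsetSum _ fun j _ => int _ _ (m2 j))
  · exact int _ _ m3

lemma mul_contDiff {n : ℕ} {u w : Heis n → ℝ} (hu : ContDiff ℝ 1 u) (h0 : (0 : Heis n) ∉ tsupport u)
    (hw : ∀ ξ : Heis n, ξ ≠ 0 → ContDiffAt ℝ 1 w ξ) : ContDiff ℝ 1 fun ξ => u ξ * w ξ := by
  rw [contDiff_iff_contDiffAt]
  intro ξ
  by_cases h : ξ = 0
  · subst h
    have := notMem_tsupport_iff_eventuallyEq.mp h0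
    refine (contDiffAt_const (c := (0 : ℝ))).congr_of_eventuallyEq ?_
    filter_upwards [this] with η hη
    simp [hη]
  · exact hu.contDiffAt.mul (hw ξ h)

lemma mul_continuous {n : ℕ} {u w : Heis n → ℝ} (hu : Continuous u) (h0 : (0 : Heis n) ∉ tsupport u)
    (hw : ∀ ξ : Heis n, ξ ≠ 0 → ContinuousAt w ξ) : Continuous fun ξ => u ξ * w ξ := by
  rw [continuous_iff_continuousAt]
  intro ξ
  by_cases h : ξ = 0
  · subst h
    have := notMem_tsupport_iff_eventuallyEq.mp h0
    refine (continuousAt_const (y := (0 : ℝ))).congr ?_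
    filter_upwards [this] with η hη
    simp [hη]
  · exact hu.continuousAt.mul (hw ξ h)

lemma tsupport_rpow {n : ℕ} {f : Heis n → ℝ} {s : ℝ} (hs : s ≠ 0) :
    tsupport (fun ξ => |f ξ| ^ s) ⊆ tsupport f := by
  refine closure_mono fun ξ h => ?_
  rw [Function.mem_support] at h ⊢
  intro h0
  apply h; simp [h0, Real.zero_rpow hs]

lemma hasCompactSupport_rpow {n : ℕ} {f : Heis n → ℝ} {s : ℝ} (hs : s ≠ 0)
    (hf : HasCompactSupport f) : HasCompactSupport (fun ξ => |f ξ| ^ s) :=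
  hf.of_isClosed_subset (isClosed_tsupport _) (tsupport_rpow hs)

lemma tsupport_hGrad {n : ℕ} {f : Heis n → ℝ} :
    tsupport (fun ξ => hNorm (hGrad f ξ)) ⊆ tsupport f := by
  refine (closure_mono fun ξ h => ?_).trans (tsupport_fderiv_subset ℝ)
  rw [Function.mem_support] at h ⊢
  intro h0
  apply h; simp [hNorm, hGrad, XH, YH, h0]

lemma hGrad_continuous {n : ℕ} {f : Heis n → ℝ} (hf : ContDiff ℝ 1 f) :
    Continuous (fun ξ => hNorm (hGrad f ξ)) := by
  have h : ∀ v : Heis n, Continuous fun ξ => fderiv ℝ f ξ v := fun v =>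
    (hf.continuous_fderiv one_ne_zero).clm_apply continuous_const
  have h1 := h (0, 0, 1)
  have h2 := fun j : Fin n => h (Pi.single j 1, 0, 0)
  have h3 := fun j : Fin n => h (0, Pi.single j 1, 0)
  unfold hNorm hGrad XH YH
  fun_prop

lemma hNorm_nonneg {n : ℕ} (v : (Fin n → ℝ) × (Fin n → ℝ)) : 0 ≤ hNorm v := Real.sqrt_nonneg _

lemma abs_rpow_cont {n : ℕ} {f : Heis n → ℝ} (hf : Continuous f) {s : ℝ} (hs : 0 ≤ s) :
    Continuous (fun ξ => |f ξ| ^ s) := hf.abs.rpow_const fun _ => Or.inr hs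

lemma BH_rpow_contDiffAt {n : ℕ} (b : ℝ) (ξ : Heis n) (h : ξ ≠ 0) :
    ContDiffAt ℝ 1 (fun η => BH η ^ b) ξ :=
  BH_contDiff.contDiffAt.rpow_const_of_ne (BH_pos h).ne'

lemma NHe_rpow_contDiff {n : ℕ} (b : ℝ) {e : ℝ} (he : 0 < e) :
    ContDiff ℝ 1 (fun η : Heis n => (NH η + e) ^ b) :=
  (NH_contDiff.add contDiff_const).rpow_const_of_ne
    fun η => by have := NH_nonneg η; positivity

/-- Regularized identity. -/
lemma regularized {n : ℕ} {p : ℝ} (hp : 1 < p) (b : ℝ) {e : ℝ} (he : 0 < e) (f : Heis n → ℝ)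
    (hf : ContDiff ℝ 1 f) (hc : HasCompactSupport f) (h0 : (0 : Heis n) ∉ tsupport f) :
    Continuous (fun ξ => p * |f ξ| ^ (p - 2) * f ξ * fderiv ℝ f ξ (FH ξ) *
      ((NH ξ + e) ^ ((p - 2) / 2) * BH ξ ^ b)) ∧
    Continuous (fun ξ => |f ξ| ^ p * ((NH ξ + e) ^ ((p - 2) / 2) * BH ξ ^ b * NH ξ *
      (2 * n + 4 + 4 * b + (p - 2) * (NH ξ / (NH ξ + e))))) ∧
    ∫ ξ, p * |f ξ| ^ (p - 2) * f ξ * fderiv ℝ f ξ (FH ξ) *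
      ((NH ξ + e) ^ ((p - 2) / 2) * BH ξ ^ b) =
    - ∫ ξ, |f ξ| ^ p * ((NH ξ + e) ^ ((p - 2) / 2) * BH ξ ^ b * NH ξ *
      (2 * n + 4 + 4 * b + (p - 2) * (NH ξ / (NH ξ + e)))) := by
  have hp0 : p ≠ 0 := by positivity
  set Φ : Heis n → ℝ := fun ξ => (NH ξ + e) ^ ((p - 2) / 2) * BH ξ ^ b with hΦ
  have hNe : ∀ ξ : Heis n, 0 < NH ξ + e := fun ξ => by have := NH_nonneg ξ; positivity
  have hg : ContDiff ℝ 1 (fun ξ => |f ξ| ^ p) := by simpa using hf.norm_rpow hp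
  have hg0 : (0 : Heis n) ∉ tsupport (fun ξ => |f ξ| ^ p) := fun h => h0 (tsupport_rpow hp0 h)
  have hgc := hasCompactSupport_rpow hp0 hc
  have hΦd : ∀ ξ : Heis n, ξ ≠ 0 → ContDiffAt ℝ 1 Φ ξ := fun ξ h =>
    (NHe_rpow_contDiff _ he).contDiffAt.mul (BH_rpow_contDiffAt b ξ h)
  have hk := mul_contDiff hg hg0 hΦd
  have hkc : HasCompactSupport (fun ξ => |f ξ| ^ p * Φ ξ) := hgc.mul_right
  have hN := NH_continuous (n := n)
  have hR : ∀ c d : ℝ, Continuous (fun ξ => |f ξ| ^ p * (Φ ξ * NH ξ *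
      (c + d * (NH ξ / (NH ξ + e))))) := fun c d => by
    have : Continuous fun ξ : Heis n => NH ξ * (c + d * (NH ξ / (NH ξ + e))) :=
      hN.mul (continuous_const.add (continuous_const.mul
        (hN.div (hN.add continuous_const) fun ξ => (hNe ξ).ne')))
    exact (hk.continuous.mul this).congr fun ξ => by simp only [Pi.mul_apply]; ring
  have hRi : ∀ c d : ℝ, Integrable (fun ξ => |f ξ| ^ p * (Φ ξ * NH ξ *
      (c + d * (NH ξ / (NH ξ + e))))) := fun c d =>
    (hR c d).integrable_of_hasCompactSupport hgc.mul_right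
  have hDc : Continuous fun ξ => fderiv ℝ (fun ξ => |f ξ| ^ p * Φ ξ) ξ (FH ξ) :=
    (hk.continuous_fderiv one_ne_zero).clm_apply FH_continuous
  have hDi : Integrable fun ξ => fderiv ℝ (fun ξ => |f ξ| ^ p * Φ ξ) ξ (FH ξ) := by
    refine hDc.integrable_of_hasCompactSupport ?_
    refine (hkc.fderiv ℝ).mono fun ξ h => ?_
    rw [Function.mem_support] at h ⊢
    intro h0; apply h; rw [h0]; simp
  have key : ∀ ξ, p * |f ξ| ^ (p - 2) * f ξ * fderiv ℝ f ξ (FH ξ) * Φ ξ =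
      fderiv ℝ (fun ξ => |f ξ| ^ p * Φ ξ) ξ (FH ξ) - |f ξ| ^ p * (Φ ξ * NH ξ *
      (4 * b + (p - 2) * (NH ξ / (NH ξ + e)))) := by
    intro ξ
    by_cases h : ξ = 0
    · subst h
      have hF0 : FH (0 : Heis n) = 0 := by
        unfold FH; refine Prod.ext (funext fun j => ?_) (Prod.ext (funext fun j => ?_) ?_) <;> simp
      have hN0 : NH (0 : Heis n) = 0 := by simp [NH]
      simp [hF0, hN0]
    · have d1 : HasFDerivAt (fun ξ => |f ξ| ^ p) ((p * |f ξ| ^ (p - 2) * f ξ) • fderiv ℝ f ξ) ξ :=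
        (hasDerivAt_abs_rpow (f ξ) hp).comp_hasFDerivAt ξ
          (hf.differentiable one_ne_zero ξ).hasFDerivAt
      have d2 := ((NH_hasFDerivAt ξ).add_const e).rpow_const (p := (p - 2) / 2)
        (Or.inl (hNe ξ).ne')
      have dB : HasFDerivAt BH (fderiv ℝ BH ξ) ξ :=
        ((BH_contDiff (m := 1)).differentiable one_ne_zero ξ).hasFDerivAt
      have d3 := dB.rpow_const (p := b) (Or.inl (BH_pos h).ne')
      have e1 : fderiv ℝ (fun ξ => |f ξ| ^ p * Φ ξ) ξ = _ := (d1.mul (d2.mul d3)).fderiv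
      rw [e1]
      simp only [add_apply, smul_apply, smul_eq_mul, Pi.mul_apply,
        NH_fderiv_F, BH_fderiv_F, hΦ]
      rw [Real.rpow_sub_one (hNe ξ).ne', Real.rpow_sub_one (BH_pos h).ne']
      have := (hNe ξ).ne'
      have := (BH_pos h).ne'
      field_simp
      ring
  refine ⟨?_, hR _ _, ?_⟩
  · exact (hDc.sub (hR _ _)).congr fun ξ => (key ξ).symm
  · refine (integral_congr_ae (ae_of_all _ key)).trans ?_
    rw [integral_sub hDi (hRi _ _), div_F _ hk hkc, ← integral_const_mul, ← neg_add',
      ← integral_add _ (hRi _ _)]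
    · congr 1
      refine integral_congr_ae (ae_of_all _ fun ξ => ?_)
      ring
    · have := hRi (2 * n + 4) 0
      refine this.congr (ae_of_all _ fun ξ => ?_)
      simp only []
      ring

lemma integrable_aux {n : ℕ} {f : Heis n → ℝ} {u w : Heis n → ℝ} (hu : Continuous u)
    (hc : HasCompactSupport f) (h0 : (0 : Heis n) ∉ tsupport f) (hs : tsupport u ⊆ tsupport f)
    (hw : ∀ ξ : Heis n, ξ ≠ 0 → ContinuousAt w ξ) : Integrable fun ξ => u ξ * w ξ :=
  (mul_continuous hu (fun h => h0 (hs h)) hw).integrable_of_hasCompactSupport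
    (HasCompactSupport.mul_right (hc.of_isClosed_subset (isClosed_tsupport _) hs))

lemma abs_rpow_aux (x : ℝ) {p : ℝ} (hp : 1 < p) : |x| ^ (p - 2) * |x| = |x| ^ (p - 1) := by
  by_cases h : x = 0
  · simp [h, Real.zero_rpow (by linarith : p - 1 ≠ 0)]
  · have : 0 < |x| := abs_pos.mpr h
    nth_rewrite 2 [← Real.rpow_one |x|]
    rw [← Real.rpow_add this]; congr 1; ring

/-- The limit identity. -/
lemma limit_identity {n : ℕ} {p : ℝ} (hp : 1 < p) (b : ℝ) (f : Heis n → ℝ)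
    (hf : ContDiff ℝ 1 f) (hc : HasCompactSupport f) (h0 : (0 : Heis n) ∉ tsupport f) :
    ∫ ξ, p * |f ξ| ^ (p - 2) * f ξ * fderiv ℝ f ξ (FH ξ) *
      (NH ξ ^ ((p - 2) / 2) * BH ξ ^ b) =
    - ((2 * n + 2 + 4 * b + p) * ∫ ξ, |f ξ| ^ p * (NH ξ ^ (p / 2) * BH ξ ^ b)) := by
  have hp0 : 0 < p := by positivity
  set e : ℕ → ℝ := fun m => 1 / ((m : ℝ) + 1) with hedef
  have he : ∀ m, 0 < e m := fun m => by simp only [hedef]; positivity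
  have he1 : ∀ m, e m ≤ 1 := fun m => by
    simp only [hedef]; rw [div_le_one (by positivity)]; linarith [(Nat.cast_nonneg m : (0:ℝ) ≤ m)]
  have het : Filter.Tendsto e Filter.atTop (nhds 0) := tendsto_one_div_add_atTop_nhds_zero_nat
  have hNe : ∀ (ξ : Heis n) m, 0 < NH ξ + e m := fun ξ m => by
    have := NH_nonneg ξ; have := he m; positivity
  have hNt : ∀ ξ : Heis n, Filter.Tendsto (fun m => NH ξ + e m) Filter.atTop (nhds (NH ξ)) :=
    fun ξ => by simpa using het.const_add (NH ξ)
  have L1 : Filter.Tendsto (fun m => ∫ ξ, p * |f ξ| ^ (p - 2) * f ξ * fderiv ℝ f ξ (FH ξ) *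
      ((NH ξ + e m) ^ ((p - 2) / 2) * BH ξ ^ b)) Filter.atTop
      (nhds (∫ ξ, p * |f ξ| ^ (p - 2) * f ξ * fderiv ℝ f ξ (FH ξ) *
      (NH ξ ^ ((p - 2) / 2) * BH ξ ^ b))) := by
    refine tendsto_integral_of_dominated_convergence
      (fun ξ => |f ξ| ^ (p - 1) * (p * hNorm (hGrad f ξ) * (NH ξ + 1) ^ ((p - 1) / 2) *
        (√(BH ξ) * BH ξ ^ b))) ?_ ?_ ?_ ?_
    · exact fun m => (regularized hp b (he m) f hf hc h0).1.aestronglyMeasurable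
    · refine integrable_aux (abs_rpow_cont hf.continuous (by linarith)) hc h0
        (tsupport_rpow (by linarith)) fun ξ h => ?_
      exact ((continuous_const.mul (hGrad_continuous hf)).continuousAt.mul
        (NHe_rpow_contDiff _ one_pos).continuous.continuousAt).mul
        (BH_continuous.sqrt.continuousAt.mul (BH_rpow_contDiffAt b ξ h).continuousAt)
    · refine fun m => ae_of_all _ fun ξ => ?_
      have hB := Real.rpow_nonneg (BH_nonneg ξ) b
      have hA := Real.rpow_nonneg (hNe ξ m).le ((p - 2) / 2)
      have hG := hNorm_nonneg (hGrad f ξ)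
      have hf1 := Real.rpow_nonneg (abs_nonneg (f ξ)) (p - 1)
      have hsq : √(NH ξ) * (NH ξ + e m) ^ ((p - 2) / 2) ≤ (NH ξ + 1) ^ ((p - 1) / 2) := by
        calc √(NH ξ) * (NH ξ + e m) ^ ((p - 2) / 2)
            ≤ √(NH ξ + e m) * (NH ξ + e m) ^ ((p - 2) / 2) := by
              gcongr; linarith [he m]
          _ = (NH ξ + e m) ^ ((p - 1) / 2) := by
              rw [Real.sqrt_eq_rpow, ← Real.rpow_add (hNe ξ m)]; congr 1; ring
          _ ≤ (NH ξ + 1) ^ ((p - 1) / 2) := by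
              apply Real.rpow_le_rpow (hNe ξ m).le _ (by linarith); linarith [he1 m]
      rw [Real.norm_eq_abs, abs_mul, abs_mul, abs_mul, abs_mul, abs_of_pos hp0,
        abs_of_nonneg (Real.rpow_nonneg (abs_nonneg _) _), abs_of_nonneg (mul_nonneg hA hB),
        mul_assoc p, abs_rpow_aux _ hp]
      calc p * |f ξ| ^ (p - 1) * |fderiv ℝ f ξ (FH ξ)| *
            ((NH ξ + e m) ^ ((p - 2) / 2) * BH ξ ^ b)
          ≤ p * |f ξ| ^ (p - 1) * (√(NH ξ) * √(BH ξ) * hNorm (hGrad f ξ)) *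
            ((NH ξ + e m) ^ ((p - 2) / 2) * BH ξ ^ b) := by
            gcongr; exact fderiv_F_le f ξ
        _ = |f ξ| ^ (p - 1) * (p * hNorm (hGrad f ξ) *
            (√(NH ξ) * (NH ξ + e m) ^ ((p - 2) / 2)) * (√(BH ξ) * BH ξ ^ b)) := by ring
        _ ≤ _ := by gcongr
    · refine ae_of_all _ fun ξ => ?_
      by_cases hN : NH ξ = 0
      · have : fderiv ℝ f ξ (FH ξ) = 0 := by
          have := fderiv_F_le f ξ
          rw [hN] at this
          simpa using this
        simp [this]
      · exact Filter.Tendsto.const_mul _ (((hNt ξ).rpow_const (Or.inl hN)).mul_const _)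
  have L2 : Filter.Tendsto (fun m => ∫ ξ, |f ξ| ^ p * ((NH ξ + e m) ^ ((p - 2) / 2) * BH ξ ^ b *
      NH ξ * (2 * n + 4 + 4 * b + (p - 2) * (NH ξ / (NH ξ + e m))))) Filter.atTop
      (nhds (∫ ξ, (2 * n + 2 + 4 * b + p) * (|f ξ| ^ p * (NH ξ ^ (p / 2) * BH ξ ^ b)))) := by
    refine tendsto_integral_of_dominated_convergence
      (fun ξ => |f ξ| ^ p * ((NH ξ + 1) ^ (p / 2) * BH ξ ^ b *
        (|2 * n + 4 + 4 * b| + |p - 2|))) ?_ ?_ ?_ ?_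
    · exact fun m => (regularized hp b (he m) f hf hc h0).2.1.aestronglyMeasurable
    · refine integrable_aux (abs_rpow_cont hf.continuous (by linarith)) hc h0
        (tsupport_rpow (by linarith)) fun ξ h => ?_
      exact ((NHe_rpow_contDiff _ one_pos).continuous.continuousAt.mul
        (BH_rpow_contDiffAt b ξ h).continuousAt).mul continuousAt_const
    · refine fun m => ae_of_all _ fun ξ => ?_
      have hB := Real.rpow_nonneg (BH_nonneg ξ) b
      have hA := Real.rpow_nonneg (hNe ξ m).le ((p - 2) / 2)
      have hf1 := Real.rpow_nonneg (abs_nonneg (f ξ)) p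
      have hN := NH_nonneg ξ
      have hsq : (NH ξ + e m) ^ ((p - 2) / 2) * NH ξ ≤ (NH ξ + 1) ^ (p / 2) := by
        calc (NH ξ + e m) ^ ((p - 2) / 2) * NH ξ
            ≤ (NH ξ + e m) ^ ((p - 2) / 2) * (NH ξ + e m) := by
              gcongr; linarith [he m]
          _ = (NH ξ + e m) ^ (p / 2) := by
              rw [← Real.rpow_add_one (hNe ξ m).ne']; congr 1; ring
          _ ≤ (NH ξ + 1) ^ (p / 2) := by
              apply Real.rpow_le_rpow (hNe ξ m).le _ (by linarith); linarith [he1 m]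
      have hq : |2 * n + 4 + 4 * b + (p - 2) * (NH ξ / (NH ξ + e m))| ≤
          |2 * n + 4 + 4 * b| + |p - 2| := by
        refine (abs_add_le _ _).trans ?_
        refine add_le_add le_rfl ?_
        rw [abs_mul]
        refine mul_le_of_le_one_right (abs_nonneg _) ?_
        rw [abs_of_nonneg (div_nonneg hN (hNe ξ m).le), div_le_one (hNe ξ m)]
        linarith [he m]
      rw [Real.norm_eq_abs, abs_mul, abs_mul, abs_of_nonneg hf1,
        abs_of_nonneg (mul_nonneg (mul_nonneg hA hB) hN)]
      rw [mul_right_comm _ (BH ξ ^ b)]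
      gcongr
    · refine ae_of_all _ fun ξ => ?_
      by_cases hN : NH ξ = 0
      · simp [hN, Real.zero_rpow (by positivity : p / 2 ≠ 0)]
      · have t1 := ((hNt ξ).rpow_const (p := (p - 2) / 2) (Or.inl hN))
        have t2 : Filter.Tendsto (fun m => NH ξ / (NH ξ + e m)) Filter.atTop
          (nhds (NH ξ / NH ξ)) := tendsto_const_nhds.div (hNt ξ) hN
        have t3 := (((t1.mul_const (BH ξ ^ b)).mul_const (NH ξ)).mul
          ((t2.const_mul (p - 2)).const_add (2 * n + 4 + 4 * b))).const_mul (|f ξ| ^ p)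
        convert t3 using 2
        rw [div_self hN]
        have : NH ξ ^ (p / 2) = NH ξ ^ ((p - 2) / 2) * NH ξ := by
          rw [← Real.rpow_add_one hN]; congr 1; ring
        rw [this]; ring
  have L1' := L1.congr fun m => (regularized hp b (he m) f hf hc h0).2.2
  rw [← integral_const_mul]
  exact tendsto_nhds_unique L1' L2.neg
/-- Corollary 2.3 (vi): the case `a + b + 1 = ap` of the
interpolation Hardy inequality on `ℍⁿ`. -/
theorem hardy_special_case_vi_Heisenberg
    (n : ℕ) (p q a : ℝ) (hp : 1 < p) (hpQ : p < 2 * n + 2)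
    (hQ : (2 * n + 2 : ℝ) ≠ a * p) (hpq : 1 / p + 1 / q = 1)
    (f : Heis n → ℝ) (hf : IsTestAwayZero f) :
    |2 * n + 2 - a * p| / p *
        ∫ ξ : Heis n, zNorm ξ ^ p / dH ξ ^ p * (|f ξ| ^ p / dH ξ ^ (a * p)) ≤
      (∫ ξ : Heis n, hNorm (hGrad f ξ) ^ p / dH ξ ^ (a * p)) ^ (1 / p) *
        (∫ ξ : Heis n, zNorm ξ ^ p / dH ξ ^ p * (|f ξ| ^ p / dH ξ ^ (a * p)) *
          dH ξ ^ q) ^ (1 / q) := by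
  obtain ⟨hf', hc, h0⟩ := hf
  have hf1 : ContDiff ℝ 1 f := hf'.of_le (by exact_mod_cast le_top)
  have hp0 : 0 < p := by positivity
  have hq' : 1 / q = (p - 1) / p := by field_simp at hpq ⊢; linarith
  have hq0 : 0 < q := by
    have : 0 < 1 / q := by rw [hq']; exact div_pos (by linarith) hp0
    exact one_div_pos.mp this
  have hconj : p.HolderConjugate q := by
    rw [Real.holderConjugate_iff]; exact ⟨hp, by simpa using hpq⟩
  have hpq1 : (p - 1) * q = p := by field_simp at hq'; linarith
  set b : ℝ := -((a + 1) * p / 4) with hb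
  set c : ℝ := (2 - p - a * p + a) / 4 with hcdef
  have hf0 : f 0 = 0 := image_eq_zero_of_notMem_tsupport h0
  have hG0 : hNorm (hGrad f 0) = 0 :=
    image_eq_zero_of_notMem_tsupport (f := fun ξ => hNorm (hGrad f ξ))
      fun h => h0 (tsupport_hGrad h)
  have hz : ∀ (ξ : Heis n) (s : ℝ), zNorm ξ ^ s = NH ξ ^ (s / 2) := fun ξ s => by
    have : zNorm ξ = NH ξ ^ (1 / 2 : ℝ) := by rw [← Real.sqrt_eq_rpow]; rfl
    rw [this, ← Real.rpow_mul (NH_nonneg ξ)]; congr 1; ring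
  have hd : ∀ (ξ : Heis n) (s : ℝ), dH ξ ^ s = BH ξ ^ (s / 4) := fun ξ s => by
    have : dH ξ = BH ξ ^ (1 / 4 : ℝ) := rfl
    rw [this, ← Real.rpow_mul (BH_nonneg ξ)]; congr 1; ring
  have hI : ∀ ξ : Heis n, zNorm ξ ^ p / dH ξ ^ p * (|f ξ| ^ p / dH ξ ^ (a * p)) =
      |f ξ| ^ p * (NH ξ ^ (p / 2) * BH ξ ^ b) := fun ξ => by
    by_cases h : ξ = 0
    · subst h; simp [hf0, Real.zero_rpow hp0.ne']
    · have hB := BH_pos h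
      have : BH ξ ^ b = (BH ξ ^ (p / 4))⁻¹ * (BH ξ ^ (a * p / 4))⁻¹ := by
        rw [← Real.rpow_neg hB.le, ← Real.rpow_neg hB.le, ← Real.rpow_add hB]
        congr 1; rw [hb]; ring
      rw [hz, hd, hd, this]; ring
  set h1 : Heis n → ℝ := fun ξ => hNorm (hGrad f ξ) * BH ξ ^ (-a / 4) with hh1
  set h2 : Heis n → ℝ := fun ξ => |f ξ| ^ (p - 1) * (NH ξ ^ ((p - 1) / 2) * BH ξ ^ c) with hh2
  have hcont : ∀ (r : ℝ) (ξ : Heis n), ξ ≠ 0 → ContinuousAt (fun ξ => BH ξ ^ r) ξ :=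
    fun r ξ h => (BH_rpow_contDiffAt r ξ h).continuousAt
  have h1c : Continuous h1 := mul_continuous (hGrad_continuous hf1)
    (fun h => h0 (tsupport_hGrad h)) (hcont _)
  have h2c : Continuous h2 := mul_continuous (abs_rpow_cont hf1.continuous (by linarith))
    (fun h => h0 (tsupport_rpow (by linarith) h))
    (fun ξ h => (NH_continuous.rpow_const fun _ => Or.inr (by linarith)).continuousAt.mul
      (hcont _ ξ h))
  have h1s : HasCompactSupport h1 := HasCompactSupport.mul_right
    (hc.of_isClosed_subset (isClosed_tsupport _) tsupport_hGrad)
  have h2s : HasCompactSupport h2 := HasCompactSupport.mul_right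
    (hasCompactSupport_rpow (by linarith) hc)
  have h1n : ∀ ξ, 0 ≤ h1 ξ := fun ξ =>
    mul_nonneg (hNorm_nonneg _) (Real.rpow_nonneg (BH_nonneg ξ) _)
  have h2n : ∀ ξ, 0 ≤ h2 ξ := fun ξ =>
    mul_nonneg (Real.rpow_nonneg (abs_nonneg _) _)
      (mul_nonneg (Real.rpow_nonneg (NH_nonneg ξ) _) (Real.rpow_nonneg (BH_nonneg ξ) _))
  have hold := integral_mul_le_Lp_mul_Lq_of_nonneg (μ := (volume : Measure (Heis n))) hconj
    (ae_of_all _ h1n) (ae_of_all _ h2n)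
    (h1c.memLp_of_hasCompactSupport h1s) (h2c.memLp_of_hasCompactSupport h2s)
  have e1 : ∀ ξ, h1 ξ ^ p = hNorm (hGrad f ξ) ^ p / dH ξ ^ (a * p) := fun ξ => by
    by_cases h : ξ = 0
    · subst h; simp [hh1, hG0, Real.zero_rpow hp0.ne']
    · have hB := BH_pos h
      simp only [hh1]
      rw [Real.mul_rpow (hNorm_nonneg _) (Real.rpow_nonneg hB.le _), hd, ← Real.rpow_mul hB.le,
        div_eq_mul_inv (hNorm (hGrad f ξ) ^ p), ← Real.rpow_neg hB.le]
      congr 2; ring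
  have e2 : ∀ ξ, h2 ξ ^ q =
      zNorm ξ ^ p / dH ξ ^ p * (|f ξ| ^ p / dH ξ ^ (a * p)) * dH ξ ^ q := fun ξ => by
    rw [hI]
    by_cases h : ξ = 0
    · subst h
      simp [hh2, hf0, Real.zero_rpow hp0.ne', Real.zero_rpow hq0.ne',
        Real.zero_rpow (by linarith : p - 1 ≠ 0)]
    · have hB := BH_pos h
      have hN := NH_nonneg ξ
      simp only [hh2]
      rw [Real.mul_rpow (by positivity) (by positivity), Real.mul_rpow (by positivity)
        (by positivity), hd, ← Real.rpow_mul hB.le, ← Real.rpow_mul hN,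
        ← Real.rpow_mul (abs_nonneg _), hpq1, mul_assoc, mul_assoc, ← Real.rpow_add hB]
      congr 3
      · linarith
      · rw [hb, hcdef]; linear_combination (-(a + 1) / 4) * hpq1
  simp_rw [e1, e2] at hold
  have hid := limit_identity hp b f hf1 hc h0
  have hbQ : (2 * n + 2 + 4 * b + p : ℝ) = 2 * n + 2 - a * p := by rw [hb]; ring
  rw [hbQ] at hid
  have hJ : 0 ≤ ∫ ξ, |f ξ| ^ p * (NH ξ ^ (p / 2) * BH ξ ^ b) := integral_nonneg fun ξ =>
    mul_nonneg (Real.rpow_nonneg (abs_nonneg _) _)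
      (mul_nonneg (Real.rpow_nonneg (NH_nonneg ξ) _) (Real.rpow_nonneg (BH_nonneg ξ) _))
  have hbound : ‖∫ ξ, p * |f ξ| ^ (p - 2) * f ξ * fderiv ℝ f ξ (FH ξ) *
      (NH ξ ^ ((p - 2) / 2) * BH ξ ^ b)‖ ≤ ∫ ξ, p * (h1 ξ * h2 ξ) := by
    refine norm_integral_le_of_norm_le
      (((h1c.mul h2c).integrable_of_hasCompactSupport h1s.mul_right).const_mul p)
      (ae_of_all _ fun ξ => ?_)
    by_cases h : ξ = 0
    · subst h; simp [hh1, hh2, hf0, hG0]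
    · have hB := BH_pos h
      have hN := NH_nonneg ξ
      have hA := Real.rpow_nonneg hN ((p - 2) / 2)
      have hB' := Real.rpow_nonneg hB.le b
      rw [Real.norm_eq_abs, abs_mul, abs_mul, abs_mul, abs_mul, abs_of_pos hp0,
        abs_of_nonneg (Real.rpow_nonneg (abs_nonneg _) _), abs_of_nonneg (mul_nonneg hA hB'),
        mul_assoc p, abs_rpow_aux _ hp]
      have q1 : √(NH ξ) * NH ξ ^ ((p - 2) / 2) = NH ξ ^ ((p - 1) / 2) := by
        rcases hN.eq_or_lt with h' | h'
        · rw [← h', Real.zero_rpow (by linarith : (p - 1) / 2 ≠ 0)]; simp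
        · rw [Real.sqrt_eq_rpow, ← Real.rpow_add h']; congr 1; ring
      have q2 : √(BH ξ) * BH ξ ^ b = BH ξ ^ (-a / 4) * BH ξ ^ c := by
        rw [Real.sqrt_eq_rpow, ← Real.rpow_add hB, ← Real.rpow_add hB]
        congr 1; rw [hb, hcdef]; ring
      calc p * |f ξ| ^ (p - 1) * |fderiv ℝ f ξ (FH ξ)| *
            (NH ξ ^ ((p - 2) / 2) * BH ξ ^ b)
          ≤ p * |f ξ| ^ (p - 1) * (√(NH ξ) * √(BH ξ) * hNorm (hGrad f ξ)) *
            (NH ξ ^ ((p - 2) / 2) * BH ξ ^ b) := by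
            gcongr; exact fderiv_F_le f ξ
        _ = p * |f ξ| ^ (p - 1) * hNorm (hGrad f ξ) *
            (√(NH ξ) * NH ξ ^ ((p - 2) / 2)) * (√(BH ξ) * BH ξ ^ b) := by ring
        _ = p * (h1 ξ * h2 ξ) := by rw [q1, q2]; simp only [hh1, hh2]; ring
  rw [hid, norm_neg, Real.norm_eq_abs, abs_mul, abs_of_nonneg hJ, integral_const_mul] at hbound
  simp_rw [hI] at hold ⊢
  refine le_trans ?_ hold
  rw [div_mul_eq_mul_div, div_le_iff₀ hp0]
  exact hbound.trans_eq (mul_comm _ _)
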